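/- arXiv:2406.09049 — 3 statements merged into one kernel-verified Lean document; each statement's English description precedes it below -/
import Mathlib

section
/- Let G and G' be bow-free acyclic path diagrams on the same finite vertex type V that have the same skeleton. If A(G) ⊆ A(G'), then A(G) = A(G'). (The fact, underlying Algorithm 3, that for two BAPs with the same skeleton it suffices to check inclusion of algebraic models in one direction: the dimension of the model is determined by the number of edges, and if two different algebraic models have the same dimension then neither can be contained in the other.) -/
open Matrix

structure MixedGraph (V : Type*) where
  D : V → V → Prop
  B : V → V → Prop
  symm : ∀ v w, B v w → B w v
  irrefl : ∀ v, ¬ B v v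

namespace MixedGraph

variable {V : Type*}

/-- The graph is acyclic: no directed cycles. -/
def Acyclic (G : MixedGraph V) : Prop := ∀ v, ¬ Relation.TransGen G.D v v

/-- The graph is simple: for distinct `v, w`, at most one of
`D v w`, `D w v`, `B v w` holds. -/
def Simple (G : MixedGraph V) : Prop :=
  ∀ v w, v ≠ w →
    ¬ (G.D v w ∧ G.D w v) ∧ ¬ (G.D v w ∧ G.B v w) ∧ ¬ (G.D w v ∧ G.B v w)

/-- A bow-free acyclic path diagram: a simple acyclic mixed graph. -/
def IsBAP (G : MixedGraph V) : Prop := G.Acyclic ∧ G.Simple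

/-- `Λ` is compatible with `G`. -/
def LamCompat (G : MixedGraph V) (Λ : Matrix V V ℝ) : Prop :=
  ∀ v w, ¬ G.D v w → Λ v w = 0

/-- `Ω` is compatible with `G`. -/
def OmCompat [Fintype V] (G : MixedGraph V) (Ω : Matrix V V ℝ) : Prop :=
  Ω.PosDef ∧ ∀ v w, v ≠ w → ¬ G.B v w → ¬ G.B w v → Ω v w = 0

/-- The model `M(G)` of a mixed graph. -/
def model [Fintype V] [DecidableEq V] (G : MixedGraph V) : Set (Matrix V V ℝ) :=
  {S | ∃ Λ Ω : Matrix V V ℝ, G.LamCompat Λ ∧ G.OmCompat Ω ∧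
    S = ((1 - Λ)⁻¹)ᵀ * Ω * (1 - Λ)⁻¹}

/-- The algebraic model `A(G)`: the real Zariski closure of `M(G)`. -/
def algModel [Fintype V] [DecidableEq V] (G : MixedGraph V) : Set (Matrix V V ℝ) :=
  {S | ∀ p : MvPolynomial (V × V) ℝ,
    (∀ T ∈ G.model, MvPolynomial.eval (fun e => T e.1 e.2) p = 0) →
    MvPolynomial.eval (fun e => S e.1 e.2) p = 0}

/-- The skeleton (adjacency relation) of `G`. -/
def adj (G : MixedGraph V) (v w : V) : Prop :=
  v ≠ w ∧ (G.D v w ∨ G.D w v ∨ G.B v w)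

/-- A collider triple of `G`. -/
def ColliderTriple (G : MixedGraph V) (u v w : V) : Prop :=
  u ≠ v ∧ v ≠ w ∧ u ≠ w ∧ (G.D u v ∨ G.B u v) ∧ (G.D w v ∨ G.B w v)

/-- A v-structure of `G`. -/
def VStructure (G : MixedGraph V) (u v w : V) : Prop :=
  G.ColliderTriple u v w ∧ ¬ G.adj u w

end MixedGraph

/-!
The kernel of the comorphism of the parametrization of an acyclic graph can be tested on a box of
parameters on which `Ω` is diagonally dominant, so it is the vanishing ideal of the model. This
ideal is therefore prime, and its coordinate ring embeds into a polynomial ring in `|V| + numEdges`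
indeterminates, which bounds its transcendence degree. For a bow-free graph the bound is attained:
near `Λ = 0`, `Ω = 1` the covariance matrix is `1 + (Ω - 1) + Λ + Λᵀ` to first order, and each
parameter is an entry of the linear part. Nested prime ideals whose quotients have the same finite
transcendence degree coincide.
-/

/-! ### Transcendence degree and algebraic independence -/

theorem injective_of_algebraicIndependent_comp {ι K A B : Type*} [CommRing K]
    [Nontrivial K] [CommRing A] [IsDomain A] [Algebra K A] [CommRing B] [Algebra K B] {x : ι → A}
    (hx : IsTranscendenceBasis K x) (f : A →ₐ[K] B) (hfx : AlgebraicIndependent K (f ∘ x)) :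
    Function.Injective f := by
  have hcomap : (RingHom.ker f).comap (algebraMap (Algebra.adjoin K (Set.range x)) A) = ⊥ := by
    refine (Submodule.eq_bot_iff _).mpr fun ⟨c, hc⟩ hfc ↦ Subtype.ext ?_
    rw [Algebra.adjoin_range_eq_range_aeval] at hc
    obtain ⟨q, rfl⟩ := hc
    have hq : MvPolynomial.aeval (f ∘ x) q = 0 := by
      rw [← hfc]
      exact (MvPolynomial.comp_aeval_apply x f q).symm
    exact (congrArg _ (hfx.eq_zero_of_aeval_eq_zero q hq)).trans (map_zero _)
  rw [injective_iff_map_eq_zero]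
  intro a ha
  by_contra ha0
  exact Ideal.comap_ne_bot_of_algebraic_mem ha0 ha (hx.isAlgebraic.isAlgebraic a) hcomap

theorem ideal_eq_of_le_of_trdeg_quotient_le {K R : Type*} [Field K] [CommRing R] [Algebra K R]
    {P Q : Ideal R} [P.IsPrime] [Q.IsPrime] (hPQ : P ≤ Q)
    (hfin : Algebra.trdeg K (R ⧸ P) < Cardinal.aleph0)
    (htrdeg : Algebra.trdeg K (R ⧸ P) ≤ Algebra.trdeg K (R ⧸ Q)) : P = Q := by
  let π := Ideal.Quotient.factorₐ K hPQ
  obtain ⟨ι, y, hy⟩ := exists_isTranscendenceBasis' K (R ⧸ Q)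
  choose x hx using fun i ↦ Ideal.Quotient.factor_surjective hPQ (y i)
  have hπx : AlgebraicIndependent K (π ∘ x) := by
    rw [show π ∘ x = y from funext hx]
    exact hy.1
  have hbasis : IsTranscendenceBasis K x :=
    (hπx.of_comp π).isTranscendenceBasis_of_trdeg_le hfin
      (htrdeg.trans_eq hy.cardinalMk_eq_trdeg.symm)
  refine hPQ.antisymm fun r hr ↦ ?_
  rw [← Ideal.Quotient.eq_zero_iff_mem] at hr ⊢
  exact (injective_iff_map_eq_zero π).mp
    (injective_of_algebraicIndependent_comp hbasis π hπx) _ hr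

theorem map_sub_mem_pow_succ {R : Type*} [CommRing R] {I : Ideal R} {f : R →+* R}
    (hf : ∀ a, f a - a ∈ I ^ 2) (n : ℕ) {a : R} (ha : a ∈ I ^ n) : f a - a ∈ I ^ (n + 1) := by
  induction n generalizing a with
  | zero => simpa using Ideal.pow_le_self two_ne_zero (hf a)
  | succ n ih =>
    rw [pow_succ] at ha
    refine Submodule.mul_induction_on ha (fun b hb c hc ↦ ?_) fun b c hb hc ↦ ?_
    · have hfb : f b ∈ I ^ n := by
        simpa using add_mem (Ideal.pow_le_pow_right n.le_succ (ih hb)) hb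
      have hleibniz : f (b * c) - b * c = f b * (f c - c) + (f b - b) * c := by
        rw [map_mul]; ring
      rw [hleibniz]
      refine add_mem ?_ (pow_succ I (n + 1) ▸ Ideal.mul_mem_mul (ih hb) hc)
      exact pow_add I n 2 ▸ Ideal.mul_mem_mul hfb (hf c)
    · rw [map_add, add_sub_add_comm]
      exact add_mem hb hc

/-- By Krull's intersection theorem, an element of the kernel lies in every power of `I`. -/
theorem injective_of_map_sub_mem_sq {R : Type*} [CommRing R] [IsDomain R] [IsNoetherianRing R]
    {I : Ideal R} (hI : I ≠ ⊤) {f : R →+* R} (hf : ∀ a, f a - a ∈ I ^ 2) :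
    Function.Injective f := by
  rw [injective_iff_map_eq_zero]
  intro a ha
  have hpow : ∀ n : ℕ, a ∈ I ^ n := by
    intro n
    induction n with
    | zero => simp
    | succ n ih => simpa [ha] using map_sub_mem_pow_succ hf n ih
  have hinf : a ∈ ⨅ n : ℕ, I ^ n := by simpa [Submodule.mem_iInf] using hpow
  rwa [Ideal.iInf_pow_eq_bot_of_isDomain I hI] at hinf

theorem idealOfVars_ne_top (σ K : Type*) [CommRing K] [Nontrivial K] :
    MvPolynomial.idealOfVars σ K ≠ ⊤ := by
  refine ne_top_of_le_ne_top (RingHom.ker_ne_top (MvPolynomial.eval (0 : σ → K))) ?_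
  rw [Ideal.span_le]
  rintro _ ⟨i, rfl⟩
  simp

theorem algebraicIndependent_of_sub_X_mem_sq {σ K : Type*} [Finite σ] [CommRing K] [IsDomain K]
    [IsNoetherianRing K] {y : σ → MvPolynomial σ K}
    (hy : ∀ i, y i - MvPolynomial.X i ∈ MvPolynomial.idealOfVars σ K ^ 2) :
    AlgebraicIndependent K y := by
  let J := MvPolynomial.idealOfVars σ K ^ 2
  have hmod : (Ideal.Quotient.mkₐ K J).comp (MvPolynomial.aeval y) = Ideal.Quotient.mkₐ K J := by
    ext i
    simpa using Ideal.Quotient.eq.mpr (hy i)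
  exact injective_of_map_sub_mem_sq (f := (MvPolynomial.aeval y).toRingHom)
    (idealOfVars_ne_top σ K) fun p ↦ Ideal.Quotient.eq.mp (DFunLike.congr_fun hmod p)

/-! ### Matrices -/

open scoped ComplexOrder in
theorem posDef_of_sum_row_lt_diag {n 𝕜 : Type*} [Fintype n] [DecidableEq n] [RCLike 𝕜]
    {A : Matrix n n 𝕜} (hA : A.IsHermitian)
    (hdom : ∀ k, ∑ j ∈ Finset.univ.erase k, ‖A k j‖ < RCLike.re (A k k)) : A.PosDef := by
  rw [hA.posDef_iff_eigenvalues_pos]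
  intro i
  have hspec : (hA.eigenvalues i : 𝕜) ∈ spectrum 𝕜 (Matrix.toLin' A) := by
    rw [Matrix.spectrum_toLin']
    exact (spectrum.algebraMap_mem_iff 𝕜).mpr (hA.eigenvalues_mem_spectrum_real i)
  obtain ⟨k, hk⟩ := eigenvalue_mem_ball (Module.End.hasEigenvalue_iff_mem_spectrum.mpr hspec)
  rw [mem_closedBall_iff_norm'] at hk
  have hre := (RCLike.re_le_norm _).trans hk
  rw [map_sub, RCLike.ofReal_re] at hre
  linarith [hdom k]

theorem map_matrix_inv {n R S : Type*} [Fintype n] [DecidableEq n] [CommRing R] [CommRing S]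
    (f : R →+* S) {A : Matrix n n R} (hA : IsUnit A.det) : A⁻¹.map f = (A.map f)⁻¹ := by
  refine (Matrix.inv_eq_right_inv ?_).symm
  rw [← Matrix.map_mul, Matrix.mul_nonsing_inv A hA, Matrix.map_one f f.map_zero f.map_one]

theorem matrix_mul_eq_zero_of_mem {l m n R : Type*} [Fintype m] [CommRing R] {J : Ideal R}
    (hJ : J ^ 2 = ⊥) {A : Matrix l m R} {B : Matrix m n R} (hA : ∀ i j, A i j ∈ J)
    (hB : ∀ i j, B i j ∈ J) : A * B = 0 := by
  ext i j
  refine Finset.sum_eq_zero fun k _ ↦ ?_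
  rw [← Ideal.mem_bot, ← hJ, pow_two]
  exact Ideal.mul_mem_mul (hA i k) (hB k j)

theorem inv_transpose_mul_mul_inv_of_mem {n R : Type*} [Fintype n] [DecidableEq n] [CommRing R]
    {J : Ideal R} (hJ : J ^ 2 = ⊥) {L N : Matrix n n R} (hL : ∀ i j, L i j ∈ J)
    (hN : ∀ i j, N i j ∈ J) :
    ((1 - L)⁻¹)ᵀ * (1 + N) * (1 - L)⁻¹ = 1 + (N + L + Lᵀ) := by
  have hLL : L * L = 0 := matrix_mul_eq_zero_of_mem hJ hL hL
  have hNL : N * L = 0 := matrix_mul_eq_zero_of_mem hJ hN hL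
  have hTL : Lᵀ * L = 0 := matrix_mul_eq_zero_of_mem hJ (fun i j ↦ hL j i) hL
  have hTN : Lᵀ * N = 0 := matrix_mul_eq_zero_of_mem hJ (fun i j ↦ hL j i) hN
  have hinv : (1 - L)⁻¹ = 1 + L := Matrix.inv_eq_right_inv (by simp [sub_mul, mul_add, hLL])
  rw [hinv, Matrix.transpose_add, Matrix.transpose_one]
  simp only [add_mul, mul_add, one_mul, mul_one, hTN, hTL, hNL, zero_mul]
  abel

namespace MixedGraph

variable {V R S : Type*} {G G' : MixedGraph V} [CommRing R] [CommRing S]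

/-! ### Edges -/

/-- The bidirected part of `G`. -/
def bidirected (G : MixedGraph V) : SimpleGraph V where
  Adj := G.B
  symm := ⟨G.symm⟩
  loopless := ⟨G.irrefl⟩

/-- The skeleton of `G` as a simple graph. -/
def skeleton (G : MixedGraph V) : SimpleGraph V where
  Adj := G.adj
  symm := ⟨fun v w h ↦ ⟨h.1.symm, or_left_comm.mp (h.2.imp_right (.imp_right (G.symm v w)))⟩⟩
  loopless := ⟨fun _ h ↦ h.1 rfl⟩

/-- The number of edges of `G`, directed and bidirected ones counted separately. -/
noncomputable def numEdges (G : MixedGraph V) : ℕ :=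
  Nat.card {e : V × V // G.D e.1 e.2} + Nat.card G.bidirected.edgeSet

theorem Acyclic.ne_of_D (hG : G.Acyclic) {v w : V} (h : G.D v w) : v ≠ w := by
  rintro rfl
  exact hG v (.single h)

theorem Acyclic.not_D_self (hG : G.Acyclic) (v : V) : ¬ G.D v v :=
  fun h ↦ hG.ne_of_D h rfl

theorem Acyclic.not_D_symm (hG : G.Acyclic) {v w : V} (h : G.D v w) : ¬ G.D w v :=
  fun h' ↦ hG v (.tail (.single h) h')

theorem IsBAP.not_B_of_D (hG : G.IsBAP) {v w : V} (h : G.D v w) : ¬ G.B v w :=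
  fun h' ↦ (hG.2 v w (hG.1.ne_of_D h)).2.1 ⟨h, h'⟩

theorem IsBAP.numEdges_eq_card_skeleton_edgeSet [Finite V] (hG : G.IsBAP) :
    G.numEdges = Nat.card G.skeleton.edgeSet := by
  let φ : {e : V × V // G.D e.1 e.2} ⊕ G.bidirected.edgeSet → Sym2 V :=
    Sum.elim (fun e ↦ s(e.1.1, e.1.2)) Subtype.val
  have hdir : Function.Injective fun e : {e : V × V // G.D e.1 e.2} ↦ s(e.1.1, e.1.2) := by
    rintro ⟨⟨v, w⟩, h⟩ ⟨⟨v', w'⟩, h'⟩ heq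
    obtain ⟨rfl, rfl⟩ | ⟨rfl, rfl⟩ := Sym2.eq_iff.mp heq
    · rfl
    · exact absurd h' (hG.1.not_D_symm h)
  have hφ : Function.Injective φ := by
    refine hdir.sumElim Subtype.val_injective ?_
    rintro ⟨⟨v, w⟩, h⟩ ⟨e, he⟩ rfl
    exact hG.not_B_of_D h he
  have hrange : Set.range φ = G.skeleton.edgeSet := by
    ext e
    induction e using Sym2.ind with | _ v w
    constructor
    · rintro ⟨⟨⟨v', w'⟩, h⟩ | ⟨e, he⟩, hvw⟩
      · rw [← hvw]
        exact ⟨hG.1.ne_of_D h, .inl h⟩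
      · obtain rfl : e = s(v, w) := hvw
        have hadj : G.bidirected.Adj v w := he
        exact ⟨hadj.ne, .inr (.inr hadj)⟩
    · rintro ⟨-, h | h | h⟩
      · exact ⟨.inl ⟨(v, w), h⟩, rfl⟩
      · exact ⟨.inl ⟨(w, v), h⟩, Sym2.eq_swap⟩
      · exact ⟨.inr ⟨s(v, w), h⟩, rfl⟩
  rw [numEdges, ← Nat.card_sum, ← Nat.card_range_of_injective hφ, hrange]

theorem IsBAP.numEdges_eq_of_adj_iff [Finite V] (hG : G.IsBAP) (hG' : G'.IsBAP)
    (hskel : ∀ v w, G.adj v w ↔ G'.adj v w) : G.numEdges = G'.numEdges := by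
  have hskeleton : G.skeleton = G'.skeleton :=
    SimpleGraph.ext <| funext₂ fun v w ↦ propext (hskel v w)
  rw [hG.numEdges_eq_card_skeleton_edgeSet, hG'.numEdges_eq_card_skeleton_edgeSet, hskeleton]

/-! ### The parametrization -/

/-- The parameters of the model of `G`: one coefficient for each directed edge, one variance for
each vertex and one covariance for each bidirected edge. -/
abbrev Param (G : MixedGraph V) : Type _ :=
  {e : V × V // G.D e.1 e.2} ⊕ V ⊕ G.bidirected.edgeSet

theorem card_param [Fintype V] : Nat.card G.Param = Fintype.card V + G.numEdges := by
  rw [Nat.card_sum, Nat.card_sum, Nat.card_eq_fintype_card (α := V), numEdges, add_left_comm]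

open Classical in
/-- The matrix `Λ` of coefficients of the directed edges. -/
noncomputable def coeffMatrix (G : MixedGraph V) (x : G.Param → R) : Matrix V V R :=
  fun v w ↦ if h : G.D v w then x (.inl ⟨(v, w), h⟩) else 0

open Classical in
/-- The deviation `Ω - 1` of the error covariance matrix from the identity. It is centred so that
the origin of the parameter space corresponds to the covariance matrix `1`. -/
noncomputable def errorMatrix (G : MixedGraph V) (x : G.Param → R) : Matrix V V R :=
  fun v w ↦
    if v = w then x (.inr (.inl v))
    else if h : G.B v w then x (.inr (.inr ⟨s(v, w), h⟩)) else 0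

theorem coeffMatrix_of_not_D (x : G.Param → R) {v w : V} (h : ¬ G.D v w) :
    G.coeffMatrix x v w = 0 := dif_neg h

theorem map_coeffMatrix (f : R →+* S) (x : G.Param → R) :
    (G.coeffMatrix x).map f = G.coeffMatrix (f ∘ x) := by
  ext v w
  simp only [Matrix.map_apply, coeffMatrix]
  split_ifs <;> simp

theorem map_errorMatrix (f : R →+* S) (x : G.Param → R) :
    (G.errorMatrix x).map f = G.errorMatrix (f ∘ x) := by
  ext v w
  simp only [Matrix.map_apply, errorMatrix]
  split_ifs <;> simp

theorem coeffMatrix_mem {J : Ideal R} {x : G.Param → R} (hx : ∀ i, x i ∈ J) (v w : V) :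
    G.coeffMatrix x v w ∈ J := by
  rw [coeffMatrix]
  split_ifs
  exacts [hx _, zero_mem J]

theorem errorMatrix_mem {J : Ideal R} {x : G.Param → R} (hx : ∀ i, x i ∈ J) (v w : V) :
    G.errorMatrix x v w ∈ J := by
  rw [errorMatrix]
  split_ifs
  exacts [hx _, hx _, zero_mem J]

theorem errorMatrix_comm (x : G.Param → R) (v w : V) :
    G.errorMatrix x v w = G.errorMatrix x w v := by
  rcases eq_or_ne v w with rfl | hne
  · rfl
  · have hswap : s(v, w) = s(w, v) := Sym2.eq_swap
    simp only [errorMatrix, if_neg hne, if_neg hne.symm, hswap]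
    split_ifs with hvw hwv hwv
    exacts [rfl, absurd (G.symm v w hvw) hwv, absurd (G.symm w v hwv) hvw, rfl]

/-- The matrix is the linear part of `covMatrix` at the origin of the parameter space. -/
theorem IsBAP.exists_errorMatrix_add_apply_eq (hG : G.IsBAP) (x : G.Param → R) (i : G.Param) :
    ∃ v w, (G.errorMatrix x + G.coeffMatrix x + (G.coeffMatrix x)ᵀ) v w = x i := by
  simp only [Matrix.add_apply, Matrix.transpose_apply]
  obtain ⟨⟨v, w⟩, h⟩ | v | ⟨e, h⟩ := i
  · have hwv := hG.1.not_D_symm h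
    have hB := hG.not_B_of_D h
    exact ⟨v, w, by simp_all [errorMatrix, coeffMatrix, hG.1.ne_of_D h]⟩
  · exact ⟨v, v, by simp [errorMatrix, coeffMatrix, hG.1.not_D_self v]⟩
  · induction e using Sym2.ind with | _ v w
    have hadj : G.bidirected.Adj v w := h
    have hB : G.B v w := hadj
    have hvw : ¬ G.D v w := fun h' ↦ hG.not_B_of_D h' hB
    have hwv : ¬ G.D w v := fun h' ↦ hG.not_B_of_D h' (G.symm v w hB)
    exact ⟨v, w, by simp [errorMatrix, coeffMatrix, hvw, hwv, hB, hadj.ne]⟩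

variable [Fintype V] [DecidableEq V]

/-- The covariance matrix `(1 - Λ)⁻ᵀ Ω (1 - Λ)⁻¹` with parameters `x`. -/
noncomputable def covMatrix (G : MixedGraph V) (x : G.Param → R) : Matrix V V R :=
  ((1 - G.coeffMatrix x)⁻¹)ᵀ * (1 + G.errorMatrix x) * (1 - G.coeffMatrix x)⁻¹

/-- Sorting the vertices by their rank in the ancestral order makes `1 - L` block unitriangular. -/
theorem Acyclic.det_one_sub_eq_one (hG : G.Acyclic) {L : Matrix V V R}
    (hL : ∀ v w, ¬ G.D v w → L v w = 0) : (1 - L).det = 1 := by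
  have : Std.Irrefl (Relation.TransGen G.D) := ⟨hG⟩
  have hwf : WellFounded (Relation.TransGen G.D) := Finite.wellFounded_of_trans_of_irrefl _
  have : IsWellFounded V (Relation.TransGen G.D) := ⟨hwf⟩
  let rank := IsWellFounded.rank (Relation.TransGen G.D)
  have hrank {v w : V} (h : ¬ rank v < rank w) : L v w = 0 :=
    hL v w fun hD ↦ h (IsWellFounded.rank_lt_of_rel (.single hD))
  have htri : (1 - L).BlockTriangular rank :=
    Matrix.blockTriangular_one.sub fun v w hwv ↦ hrank hwv.not_gt
  have hblock (a : Ordinal) : (1 - L).toSquareBlock rank a = 1 := by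
    ext ⟨v, hv⟩ ⟨w, hw⟩
    simp [Matrix.toSquareBlock_def, Matrix.one_apply, hrank (hv.trans hw.symm).not_lt]
  simp [htri.det, hblock]

theorem Acyclic.map_covMatrix (hG : G.Acyclic) (f : R →+* S) (x : G.Param → R) :
    (G.covMatrix x).map f = G.covMatrix (f ∘ x) := by
  have hunit : IsUnit (1 - G.coeffMatrix x).det := by
    rw [hG.det_one_sub_eq_one fun _ _ ↦ coeffMatrix_of_not_D x]
    exact isUnit_one
  have hone : (1 : Matrix V V R).map f = 1 := Matrix.map_one f f.map_zero f.map_one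
  simp only [covMatrix, Matrix.map_mul, Matrix.transpose_map, map_matrix_inv f hunit,
    Matrix.map_sub f f.map_sub, Matrix.map_add f f.map_add, hone, map_coeffMatrix, map_errorMatrix]

theorem Acyclic.map_covMatrix_apply (hG : G.Acyclic) (f : R →+* S) (x : G.Param → R) (v w : V) :
    f (G.covMatrix x v w) = G.covMatrix (f ∘ x) v w :=
  congrFun₂ (hG.map_covMatrix f x) v w

theorem IsBAP.exists_covMatrix_apply_sub_mem_sq (hG : G.IsBAP) {I : Ideal R} {x : G.Param → R}
    (hx : ∀ i, x i ∈ I) (i : G.Param) :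
    ∃ v w, G.covMatrix x v w - (1 : Matrix V V R) v w - x i ∈ I ^ 2 := by
  let π := Ideal.Quotient.mk (I ^ 2)
  have hJ : I.map π ^ 2 = ⊥ := by rw [← Ideal.map_pow, Ideal.map_quotient_self]
  have hπx : ∀ j, (π ∘ x) j ∈ I.map π := fun j ↦ Ideal.mem_map_of_mem π (hx j)
  obtain ⟨v, w, hvw⟩ := hG.exists_errorMatrix_add_apply_eq (π ∘ x) i
  have hcov : G.covMatrix (π ∘ x) v w = (1 : Matrix V V (R ⧸ I ^ 2)) v w + π (x i) := by
    rw [covMatrix, inv_transpose_mul_mul_inv_of_mem hJ (coeffMatrix_mem hπx) (errorMatrix_mem hπx),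
      Matrix.add_apply, hvw, Function.comp_apply]
  have hone : π ((1 : Matrix V V R) v w) = (1 : Matrix V V (R ⧸ I ^ 2)) v w :=
    congrFun₂ (Matrix.map_one π π.map_zero π.map_one) v w
  refine ⟨v, w, Ideal.Quotient.eq_zero_iff_mem.mp ?_⟩
  change π _ = 0
  rw [map_sub, map_sub, hG.1.map_covMatrix_apply, hcov, hone, add_sub_cancel_left, sub_self]

theorem covMatrix_mem_model {x : G.Param → ℝ}
    (hx : (1 + G.errorMatrix x).PosDef) : G.covMatrix x ∈ G.model := by
  refine ⟨G.coeffMatrix x, 1 + G.errorMatrix x, fun _ _ ↦ coeffMatrix_of_not_D x,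
    ⟨hx, fun v w hne hB _ ↦ ?_⟩, rfl⟩
  simp [errorMatrix, hne, hB]

theorem exists_covMatrix_eq {T : Matrix V V ℝ} (hT : T ∈ G.model) :
    ∃ x : G.Param → ℝ, G.covMatrix x = T := by
  obtain ⟨L, W, hL, ⟨hW, hW₀⟩, rfl⟩ := hT
  have hsymm (v w : V) : W v w = W w v := by simpa using (hW.1.apply v w).symm
  let x : G.Param → ℝ := Sum.elim (fun e ↦ L e.1.1 e.1.2)
    (Sum.elim (fun v ↦ W v v - 1) fun e ↦ Sym2.lift ⟨W, hsymm⟩ e.1)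
  have hcoeff : G.coeffMatrix x = L := by
    ext v w
    rw [coeffMatrix]
    split_ifs with h
    exacts [rfl, (hL v w h).symm]
  have herror : 1 + G.errorMatrix x = W := by
    ext v w
    rw [Matrix.add_apply, errorMatrix]
    split_ifs with heq h
    · subst heq
      simp [x]
    · simp [x, Matrix.one_apply_ne heq]
    · rw [Matrix.one_apply_ne heq, hW₀ v w heq h fun h' ↦ h (G.symm w v h'), add_zero]
  exact ⟨x, by rw [covMatrix, hcoeff, herror]⟩

theorem posDef_one_add_errorMatrix {x : G.Param → ℝ}
    (hvar : ∀ v, (Fintype.card V : ℝ) ≤ x (.inr (.inl v)))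
    (hcov : ∀ e, |x (.inr (.inr e))| ≤ 1) : (1 + G.errorMatrix x).PosDef := by
  refine posDef_of_sum_row_lt_diag (Matrix.isHermitian_one.add ?_) fun v ↦ ?_
  · exact Matrix.IsHermitian.ext fun v w ↦ errorMatrix_comm x w v
  · have hoff : ∀ w ∈ Finset.univ.erase v, ‖(1 + G.errorMatrix x) v w‖ ≤ 1 := by
      intro w hw
      have hne : v ≠ w := (Finset.ne_of_mem_erase hw).symm
      rw [Matrix.add_apply, Matrix.one_apply_ne hne, zero_add, errorMatrix, if_neg hne]
      split_ifs
      exacts [hcov _, norm_zero.trans_le zero_le_one]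
    calc ∑ w ∈ Finset.univ.erase v, ‖(1 + G.errorMatrix x) v w‖
        ≤ (Finset.univ.erase v).card := by simpa using Finset.sum_le_card_nsmul _ _ _ hoff
      _ ≤ Fintype.card V := by exact_mod_cast Finset.card_le_univ _
      _ < 1 + x (.inr (.inl v)) := by linarith [hvar v]
      _ = (1 + G.errorMatrix x) v v := by simp [errorMatrix]

/-! ### The vanishing ideal -/

/-- The ideal of polynomials vanishing on the model of `G`, whose zero set is the algebraic
model. -/
noncomputable def modelIdeal (G : MixedGraph V) : Ideal (MvPolynomial (V × V) ℝ) :=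
  MvPolynomial.vanishingIdeal ℝ (Function.uncurry '' G.model)

theorem mem_modelIdeal {p : MvPolynomial (V × V) ℝ} :
    p ∈ G.modelIdeal ↔ ∀ T ∈ G.model, MvPolynomial.eval (fun e ↦ T e.1 e.2) p = 0 :=
  Set.forall_mem_image

theorem mem_algModel {T : Matrix V V ℝ} :
    T ∈ G.algModel ↔ ∀ p ∈ G.modelIdeal, MvPolynomial.eval (fun e ↦ T e.1 e.2) p = 0 :=
  forall_congr' fun _ ↦ imp_congr_left mem_modelIdeal.symm

theorem model_subset_algModel : G.model ⊆ G.algModel :=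
  fun T hT _ hp ↦ hp T hT

theorem modelIdeal_le_of_algModel_subset (h : G.algModel ⊆ G'.algModel) :
    G'.modelIdeal ≤ G.modelIdeal := fun p hp ↦
  mem_modelIdeal.mpr fun _ hT ↦ mem_algModel.mp (h (model_subset_algModel hT)) p hp

/-- The comorphism of the parametrization: it substitutes the covariance matrix with
indeterminate parameters into a polynomial. -/
noncomputable def comorphism (G : MixedGraph V) :
    MvPolynomial (V × V) ℝ →ₐ[ℝ] MvPolynomial G.Param ℝ :=
  MvPolynomial.aeval fun e ↦ G.covMatrix MvPolynomial.X e.1 e.2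

theorem Acyclic.eval_comorphism (hG : G.Acyclic) (x : G.Param → ℝ) (p : MvPolynomial (V × V) ℝ) :
    MvPolynomial.eval x (G.comorphism p) =
      MvPolynomial.eval (fun e ↦ G.covMatrix x e.1 e.2) p := by
  have hX : MvPolynomial.eval x ∘ MvPolynomial.X = x := funext fun i ↦ MvPolynomial.eval_X i
  have hcov (v w : V) :
      MvPolynomial.eval x (G.covMatrix MvPolynomial.X v w) = G.covMatrix x v w := by
    rw [hG.map_covMatrix_apply, hX]
  induction p using MvPolynomial.induction_on with
  | C a => simp
  | add p q hp hq => simp only [map_add, hp, hq]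
  | mul_X p e hp =>
    rw [map_mul, map_mul, hp, map_mul, MvPolynomial.eval_X, comorphism, MvPolynomial.aeval_X, hcov]

theorem Acyclic.modelIdeal_eq_ker (hG : G.Acyclic) :
    G.modelIdeal = RingHom.ker G.comorphism := by
  ext p
  rw [mem_modelIdeal, RingHom.mem_ker]
  constructor
  · intro hp
    let box : G.Param → Set ℝ :=
      Sum.elim (fun _ ↦ Set.univ)
        (Sum.elim (fun _ ↦ Set.Ici (Fintype.card V : ℝ)) fun _ ↦ Set.Icc (-1) 1)
    have hbox : ∀ i, (box i).Infinite := by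
      rintro (_ | _ | _)
      exacts [Set.infinite_univ, Set.Ici_infinite _, Set.Icc_infinite (by norm_num)]
    refine MvPolynomial.funext_set box hbox fun x hx ↦ ?_
    rw [hG.eval_comorphism, map_zero]
    exact hp _ <| covMatrix_mem_model <| posDef_one_add_errorMatrix
      (fun v ↦ hx (.inr (.inl v)) trivial) fun e ↦ abs_le.mpr (hx (.inr (.inr e)) trivial)
  · intro hp T hT
    obtain ⟨x, rfl⟩ := exists_covMatrix_eq hT
    rw [← hG.eval_comorphism, hp, map_zero]

theorem Acyclic.isPrime_modelIdeal (hG : G.Acyclic) : G.modelIdeal.IsPrime :=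
  hG.modelIdeal_eq_ker ▸ RingHom.ker_isPrime _

theorem Acyclic.trdeg_quotient_modelIdeal_le (hG : G.Acyclic) :
    Algebra.trdeg ℝ (MvPolynomial (V × V) ℝ ⧸ G.modelIdeal) ≤
      (Fintype.card V + G.numEdges : ℕ) := by
  rw [hG.modelIdeal_eq_ker, ← card_param, Nat.cast_card]
  exact (trdeg_le_of_injective _ (Ideal.kerLiftAlg_injective G.comorphism)).trans_eq
    (by rw [MvPolynomial.trdeg_of_isDomain, Cardinal.lift_uzero])

theorem IsBAP.le_trdeg_quotient_modelIdeal (hG : G.IsBAP) :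
    (Fintype.card V + G.numEdges : ℕ) ≤
      Algebra.trdeg ℝ (MvPolynomial (V × V) ℝ ⧸ G.modelIdeal) := by
  rw [hG.1.modelIdeal_eq_ker, ← card_param, Nat.cast_card]
  choose v w hvw using hG.exists_covMatrix_apply_sub_mem_sq
    (I := MvPolynomial.idealOfVars G.Param ℝ) fun i ↦ Ideal.subset_span ⟨i, rfl⟩
  let z (i : G.Param) : MvPolynomial (V × V) ℝ :=
    MvPolynomial.X (v i, w i) - MvPolynomial.C ((1 : Matrix V V ℝ) (v i) (w i))
  have hcomorphism (i : G.Param) : G.comorphism (z i) = G.covMatrix MvPolynomial.X (v i) (w i) -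
      (1 : Matrix V V (MvPolynomial G.Param ℝ)) (v i) (w i) := by
    simp only [z, comorphism, map_sub, MvPolynomial.aeval_X, MvPolynomial.algHom_C,
      Matrix.one_apply]
    split_ifs <;> simp
  have hindep : AlgebraicIndependent ℝ (G.comorphism ∘ z) :=
    algebraicIndependent_of_sub_X_mem_sq fun i ↦ by
      rw [Function.comp_apply, hcomorphism]
      exact hvw i
  exact (AlgebraicIndependent.of_comp (x := Ideal.Quotient.mkₐ ℝ _ ∘ z)
    (Ideal.kerLiftAlg G.comorphism) hindep).cardinalMk_le_trdeg

end MixedGraph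

theorem algModel_eq_of_subset_of_skeleton_eq_general
    {V : Type*} [Fintype V] [DecidableEq V]
    (G G' : MixedGraph V) (hG : G.IsBAP) (hG' : G'.Acyclic)
    (hedges : G'.numEdges ≤ G.numEdges)
    (hsub : G.algModel ⊆ G'.algModel) :
    G.algModel = G'.algModel := by
  have := hG.1.isPrime_modelIdeal
  have := hG'.isPrime_modelIdeal
  have hdim' := hG'.trdeg_quotient_modelIdeal_le
  have hdim : (Fintype.card V + G'.numEdges : ℕ) ≤
      Algebra.trdeg ℝ (MvPolynomial (V × V) ℝ ⧸ G.modelIdeal) :=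
    (Nat.cast_le.mpr (Nat.add_le_add_left hedges _)).trans hG.le_trdeg_quotient_modelIdeal
  have hideal : G'.modelIdeal = G.modelIdeal :=
    ideal_eq_of_le_of_trdeg_quotient_le (MixedGraph.modelIdeal_le_of_algModel_subset hsub)
      (hdim'.trans_lt (Cardinal.natCast_lt_aleph0)) (hdim'.trans hdim)
  ext T
  rw [MixedGraph.mem_algModel, MixedGraph.mem_algModel, hideal]

/-- For two BAPs with the same skeleton, inclusion of algebraic models
in one direction implies algebraic equivalence. -/
theorem algModel_eq_of_subset_of_skeleton_eq
    {V : Type*} [Fintype V] [DecidableEq V]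
    (G G' : MixedGraph V) (hG : G.IsBAP) (hG' : G'.IsBAP)
    (hskel : ∀ v w, G.adj v w ↔ G'.adj v w)
    (hsub : G.algModel ⊆ G'.algModel) :
    G.algModel = G'.algModel := by
  exact algModel_eq_of_subset_of_skeleton_eq_general G G' hG hG'.1
    (hG.numEdges_eq_of_adj_iff hG' hskel).ge hsub
end

section
/- Let G be a complete bow-free acyclic path diagram on a finite vertex type V, i.e. a BAP in which every pair of distinct vertices is adjacent (adj_G(v,w) holds for all v ≠ w). Then the algebraic model is all symmetric matrices: A(G) = {Σ : Matrix V V ℝ | Σᵀ = Σ}. Equivalently, G imposes no algebraic constraints beyond symmetry: every polynomial in MvPolynomial (V × V) ℝ that vanishes on M(G) vanishes on all symmetric real matrices. (The claim in Example 3 that complete BAPs impose no algebraic constraints.) -/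
open Matrix

/-!
At `(Λ, Ω) = (0, 1)` the parametrization `(Λ, Ω) ↦ (1 - Λ)⁻ᵀ Ω (1 - Λ)⁻¹` has differential
`(Λ, Ω) ↦ Λ + Λᵀ + Ω`. When every pair of vertices is adjacent, each entry of a symmetric matrix can
be absorbed by `Λ` or by `Ω`, so this differential maps the directions allowed by the graph onto the
symmetric matrices. By the submersion form of the inverse function theorem the model then contains
all symmetric matrices near `1`, and a polynomial vanishing on a nonempty open subset of a linear
space vanishes on the whole space.
-/

open Filter Topology

section Parametrization

/-- The covariance parametrization `(1 - Λ)⁻ᵀ Ω (1 - Λ)⁻¹` of a linear structural equation model,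
in an arbitrary star ring. It uses `Ring.inverse`, so it is `0` when `1 - Λ` is not a unit. -/
noncomputable def semCovariance {A : Type*} [Ring A] [Star A] (Λ Ω : A) : A :=
  star (Ring.inverse (1 - Λ)) * Ω * Ring.inverse (1 - Λ)

theorem semCovariance_zero_left {A : Type*} [Ring A] [StarMul A] (Ω : A) :
    semCovariance 0 Ω = Ω := by
  simp [semCovariance]

theorem isSelfAdjoint_semCovariance {A : Type*} [Ring A] [StarMul A] (Λ : A) {Ω : A}
    (hΩ : IsSelfAdjoint Ω) : IsSelfAdjoint (semCovariance Λ Ω) :=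
  hΩ.conjugate' _

theorem hasStrictFDerivAt_ringInverse_one_sub (𝕜 : Type*) [NontriviallyNormedField 𝕜]
    (A : Type*) [NormedRing A] [HasSummableGeomSeries A] [NormedAlgebra 𝕜 A] :
    HasStrictFDerivAt (fun x : A => Ring.inverse (1 - x)) (ContinuousLinearMap.id 𝕜 A) 0 := by
  have hsub : HasStrictFDerivAt (fun x : A => 1 - x) (-ContinuousLinearMap.id 𝕜 A) 0 :=
    (hasStrictFDerivAt_id 0).const_sub 1
  have hinv : HasStrictFDerivAt Ring.inverse (-ContinuousLinearMap.mulLeftRight 𝕜 A 1 1)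
      (1 - 0 : A) := by
    simpa using hasStrictFDerivAt_ringInverse (𝕜 := 𝕜) (1 : Aˣ)
  convert! hinv.comp 0 hsub using 1
  ext x
  simp

variable (𝕜 : Type*) [NontriviallyNormedField 𝕜] [StarRing 𝕜] [TrivialStar 𝕜]
  {A : Type*} [NormedRing A] [StarRing A] [NormedAlgebra 𝕜 A] [StarModule 𝕜 A]

theorem hasStrictFDerivAt_semCovariance [HasSummableGeomSeries A] [ContinuousStar A] :
    HasStrictFDerivAt (fun x : A × A => semCovariance x.1 x.2)
      (.fst 𝕜 A A + (starL' 𝕜 : A ≃L[𝕜] A) ∘L .fst 𝕜 A A + .snd 𝕜 A A) (0, 1) := by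
  have hinv : HasStrictFDerivAt (fun x : A × A => Ring.inverse (1 - x.1)) (.fst 𝕜 A A) (0, 1) := by
    have hfst := hasStrictFDerivAt_fst (𝕜 := 𝕜) (p := ((0, 1) : A × A))
    exact (hasStrictFDerivAt_ringInverse_one_sub 𝕜 A).comp ((0, 1) : A × A) hfst
  convert! (hinv.star.fun_mul' hasStrictFDerivAt_snd).fun_mul' hinv using 1
  ext x <;> simp

variable [CompleteSpace A] [NormedStarGroup A] [Invertible (2 : 𝕜)]

theorem eventually_exists_semCovariance_eq (P Q : Submodule 𝕜 A) [CompleteSpace P]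
    [CompleteSpace Q] (hQ : ∀ Ω ∈ Q, IsSelfAdjoint Ω) (hone : 1 ∈ Q)
    (hsurj : ∀ S : A, IsSelfAdjoint S → ∃ Λ ∈ P, ∃ Ω ∈ Q, Λ + star Λ + Ω = S)
    {U : Set A} (hU : U ∈ 𝓝 1) :
    ∀ᶠ S in 𝓝[selfAdjoint A] (1 : A), ∃ Λ ∈ P, ∃ Ω ∈ Q, Ω ∈ U ∧ semCovariance Λ Ω = S := by
  have : CompleteSpace (selfAdjoint A) :=
    (isClosed_eq continuous_star continuous_id).completeSpace_coe
  let x₀ : P × Q := (0, ⟨1, hone⟩)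
  -- Projecting to the self-adjoint part only restricts the codomain: on `P × Q` the parametrization
  -- is already self-adjoint.
  have hderiv : HasStrictFDerivAt
      (fun x : P × Q => selfAdjointPartL 𝕜 A (semCovariance (x.1 : A) (x.2 : A)))
      (selfAdjointPartL 𝕜 A ∘L (.fst 𝕜 A A + (starL' 𝕜 : A ≃L[𝕜] A) ∘L .fst 𝕜 A A + .snd 𝕜 A A) ∘L
        P.subtypeL.prodMap Q.subtypeL) x₀ :=
    (selfAdjointPartL 𝕜 A).hasStrictFDerivAt.comp x₀
      ((hasStrictFDerivAt_semCovariance 𝕜).comp x₀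
        (P.subtypeL.prodMap Q.subtypeL).hasStrictFDerivAt)
  have hmap := hderiv.map_nhds_eq_of_surj <| LinearMap.range_eq_top.2 fun S => by
    obtain ⟨Λ, hΛ, Ω, hΩ, hS⟩ := hsurj S S.2
    refine ⟨(⟨Λ, hΛ⟩, ⟨Ω, hΩ⟩), ?_⟩
    have hpart : selfAdjointPartL 𝕜 A (Λ + star Λ + Ω) = S := by
      rw [hS]
      exact S.2.selfAdjointPart_apply 𝕜
    simpa using hpart
  have hx₀ : selfAdjointPartL 𝕜 A (semCovariance (x₀.1 : A) (x₀.2 : A)) = 1 := by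
    simp only [x₀, ZeroMemClass.coe_zero, semCovariance_zero_left]
    exact (IsSelfAdjoint.one A).selfAdjointPart_apply 𝕜
  have hUx : ∀ᶠ x : P × Q in 𝓝 x₀, (x.2 : A) ∈ U :=
    (continuous_subtype_val.comp continuous_snd).continuousAt.eventually_mem hU
  rw [hx₀] at hmap
  refine (eventually_nhds_subtype_iff _ (1 : selfAdjoint A) _).1 ?_
  rw [← hmap, eventually_map]
  filter_upwards [hUx] with x hx
  exact ⟨x.1, x.1.2, x.2, x.2.2, hx,
    ((isSelfAdjoint_semCovariance _ (hQ _ x.2.2)).coe_selfAdjointPart_apply 𝕜).symm⟩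

end Parametrization

open scoped ComplexOrder Matrix.Norms.L2Operator in
theorem posDef_of_norm_sub_one_lt_one {n 𝕜 : Type*} [Fintype n] [DecidableEq n] [RCLike 𝕜]
    {A : Matrix n n 𝕜} (hA : A.IsHermitian) (hnorm : ‖A - 1‖ < 1) : A.PosDef := by
  refine hA.posDef_iff_eigenvalues_pos.2 fun i => ?_
  have : Nonempty n := ⟨i⟩
  have : NormOneClass (Matrix n n 𝕜) := ⟨CStarRing.norm_one⟩
  have hspec : algebraMap ℝ 𝕜 (hA.eigenvalues i) ∈ spectrum 𝕜 A :=
    spectrum.algebraMap_mem 𝕜 (hA.eigenvalues_mem_spectrum_real i)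
  have hmem : algebraMap ℝ 𝕜 (hA.eigenvalues i - 1) ∈ spectrum 𝕜 (A - 1) := by
    rw [map_sub, map_one, ← map_one (algebraMap 𝕜 (Matrix n n 𝕜)), ← spectrum.sub_singleton_eq]
    exact Set.sub_mem_sub hspec rfl
  have habs : |hA.eigenvalues i - 1| < 1 := by
    simpa only [norm_algebraMap', Real.norm_eq_abs] using
      (spectrum.norm_le_norm_of_mem hmem).trans_lt hnorm
  linarith [(abs_lt.1 habs).1]

namespace MixedGraph

variable {V : Type*}

/-- The linear space of coefficient matrices `Λ` compatible with `G`. -/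
def lamSubmodule (G : MixedGraph V) : Submodule ℝ (Matrix V V ℝ) where
  carrier := {Λ | G.LamCompat Λ}
  zero_mem' _ _ _ := rfl
  add_mem' hΛ hΛ' v w h := by simp [hΛ v w h, hΛ' v w h]
  smul_mem' c Λ hΛ v w h := by simp [hΛ v w h]

/-- The linear span of the error covariances `Ω` compatible with `G`: their support and symmetry
conditions without positive definiteness. -/
def omSubmodule (G : MixedGraph V) : Submodule ℝ (Matrix V V ℝ) where
  carrier := {Ω | Ω.IsHermitian ∧ ∀ v w, v ≠ w → ¬ G.B v w → ¬ G.B w v → Ω v w = 0}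
  zero_mem' := ⟨isHermitian_zero, fun _ _ _ _ _ => rfl⟩
  add_mem' hΩ hΩ' := ⟨hΩ.1.add hΩ'.1, fun v w h₁ h₂ h₃ => by
    simp [hΩ.2 v w h₁ h₂ h₃, hΩ'.2 v w h₁ h₂ h₃]⟩
  smul_mem' c Ω hΩ := ⟨hΩ.1.smul (.all c), fun v w h₁ h₂ h₃ => by
    simp [hΩ.2 v w h₁ h₂ h₃]⟩

theorem one_mem_omSubmodule [DecidableEq V] (G : MixedGraph V) : 1 ∈ G.omSubmodule :=
  ⟨isHermitian_one, fun _ _ hne _ _ => one_apply_ne hne⟩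

theorem exists_add_transpose_add_eq_of_complete {G : MixedGraph V}
    (hcomplete : ∀ v w : V, v ≠ w → G.adj v w) {S : Matrix V V ℝ} (hS : S.IsHermitian) :
    ∃ Λ ∈ G.lamSubmodule, ∃ Ω ∈ G.omSubmodule, Λ + Λᵀ + Ω = S := by
  classical
  -- An entry joined by directed edges both ways is split evenly between `Λ` and `Λᵀ`.
  let Λ : Matrix V V ℝ :=
    of fun v w => if G.D v w then (if G.D w v then S v w / 2 else S v w) else 0
  have hΛ : Λ ∈ G.lamSubmodule := fun v w h => if_neg h
  have hsum : (Λ + Λᵀ).IsHermitian := isHermitian_add_transpose_self Λ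
  refine ⟨Λ, hΛ, S - (Λ + Λᵀ), ⟨hS.sub hsum, fun v w hne hvw _ => ?_⟩, add_sub_cancel _ _⟩
  have hsymm : S w v = S v w := hS.apply v w
  rcases (hcomplete v w hne).2 with h | h | h
  · by_cases h' : G.D w v <;> simp [Λ, h, h', hsymm]
  · by_cases h' : G.D v w <;> simp [Λ, h, h', hsymm]
  · exact absurd h hvw

variable [Fintype V] [DecidableEq V] {G : MixedGraph V}

theorem mem_model_iff {S : Matrix V V ℝ} :
    S ∈ G.model ↔
      ∃ Λ ∈ G.lamSubmodule, ∃ Ω ∈ G.omSubmodule, Ω.PosDef ∧ semCovariance Λ Ω = S := by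
  simp only [semCovariance, ← nonsing_inv_eq_ringInverse]
  constructor
  · rintro ⟨Λ, Ω, hΛ, ⟨hpos, hsupp⟩, rfl⟩
    exact ⟨Λ, hΛ, Ω, ⟨hpos.isHermitian, hsupp⟩, hpos, rfl⟩
  · rintro ⟨Λ, hΛ, Ω, ⟨-, hsupp⟩, hpos, rfl⟩
    exact ⟨Λ, Ω, hΛ, ⟨hpos, hsupp⟩, rfl⟩

open scoped Matrix.Norms.L2Operator in
theorem eventually_mem_model_of_complete (hcomplete : ∀ v w : V, v ≠ w → G.adj v w) :
    ∀ᶠ S in 𝓝[selfAdjoint (Matrix V V ℝ)] (1 : Matrix V V ℝ), S ∈ G.model := by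
  have : CompleteSpace G.lamSubmodule := FiniteDimensional.complete ℝ _
  have : CompleteSpace G.omSubmodule := FiniteDimensional.complete ℝ _
  filter_upwards [eventually_exists_semCovariance_eq ℝ G.lamSubmodule G.omSubmodule
    (fun _ hΩ => hΩ.1) G.one_mem_omSubmodule
    (fun _ hS => exists_add_transpose_add_eq_of_complete hcomplete hS)
    (Metric.ball_mem_nhds 1 one_pos)] with S hS
  obtain ⟨Λ, hΛ, Ω, hΩ, hball, hS⟩ := hS
  exact mem_model_iff.2
    ⟨Λ, hΛ, Ω, hΩ, posDef_of_norm_sub_one_lt_one hΩ.1 (mem_ball_iff_norm.1 hball), hS⟩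

theorem transpose_eq_of_mem_model {S : Matrix V V ℝ} (hS : S ∈ G.model) : Sᵀ = S := by
  obtain ⟨Λ, -, Ω, hΩ, -, rfl⟩ := mem_model_iff.1 hS
  exact isSelfAdjoint_semCovariance Λ hΩ.1

theorem transpose_eq_of_mem_algModel {S : Matrix V V ℝ} (hS : S ∈ G.algModel) : Sᵀ = S := by
  ext v w
  have hvw := hS (MvPolynomial.X (w, v) - MvPolynomial.X (v, w)) fun T hT => by
    simpa [sub_eq_zero] using congrFun₂ (transpose_eq_of_mem_model hT) v w
  simpa [sub_eq_zero] using hvw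

open scoped Matrix.Norms.L2Operator in
theorem coe_subset_algModel_of_eventually_mem_model (W : Submodule ℝ (Matrix V V ℝ))
    {S₀ : Matrix V V ℝ} (hS₀ : S₀ ∈ W) (hW : ∀ᶠ S in 𝓝[W] S₀, S ∈ G.model) :
    (W : Set (Matrix V V ℝ)) ⊆ G.algModel := by
  intro S hS p hp
  let entries : W →ₗ[ℝ] V × V → ℝ :=
    LinearMap.pi fun e => entryLinearMap ℝ ℝ e.1 e.2 ∘ₗ W.subtype
  have hzero : (fun T => MvPolynomial.eval (entries T) p) =ᶠ[𝓝 ⟨S₀, hS₀⟩] fun _ => 0 :=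
    ((eventually_nhds_subtype_iff (W : Set (Matrix V V ℝ)) ⟨S₀, hS₀⟩ _).2 hW).mono
      fun T hT => hp T hT
  exact congrFun ((AnalyticOnNhd.eval_linearMap entries p).eq_of_eventuallyEq
    analyticOnNhd_const hzero) ⟨S, hS⟩

end MixedGraph

theorem algModel_eq_symmetric_of_complete_general
    {V : Type*} [Fintype V] [DecidableEq V] (G : MixedGraph V)
    (hcomplete : ∀ v w : V, v ≠ w → G.adj v w) :
    G.algModel = {S : Matrix V V ℝ | Sᵀ = S} :=
  Set.Subset.antisymm (fun _ hS => G.transpose_eq_of_mem_algModel hS)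
    (MixedGraph.coe_subset_algModel_of_eventually_mem_model
      (selfAdjoint.submodule ℝ (Matrix V V ℝ)) (.one _)
      (G.eventually_mem_model_of_complete hcomplete))

/-- Example 3: A complete BAP imposes no algebraic constraints:
its algebraic model is the set of all symmetric real matrices. -/
theorem algModel_eq_symmetric_of_complete
    {V : Type*} [Fintype V] [DecidableEq V]
    (G : MixedGraph V) (hG : G.IsBAP)
    (hcomplete : ∀ v w : V, v ≠ w → G.adj v w) :
    G.algModel = {S : Matrix V V ℝ | Sᵀ = S} :=
  algModel_eq_symmetric_of_complete_general G hcomplete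
end

section
/- Let G' be the mixed graph on Fin 4 (vertices a = 0, b = 1, c = 2, d = 3) with directed edges a→b, b→c, c→d and bidirected edges a↔c, b↔d, a↔d; G' is a bow-free acyclic path diagram. Let Σ = !![1, 3/4, 2/9, 1/2; 3/4, 1, 3/4, 1/2; 2/9, 3/4, 1, 1/2; 1/2, 1/2, 1/2, 1] : Matrix (Fin 4) (Fin 4) ℝ. Then Σ is positive definite, but Σ ∉ M(G'): there exist no G'-compatible matrices Λ', Ω' with Σ = ((1 − Λ')⁻¹)ᵀ * Ω' * (1 − Λ')⁻¹. (The claim of Example 3, establishing that the two complete BAPs of Figure 2 are not distributionally equivalent.) -/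
/-!
If `X` has covariance `S` and `ε = (1 - Λ)ᵀ X`, then `S ∈ M(G)` means that some compatible `Λ` makes
the covariance of `ε` compatible with `G`. When two vertices `v`, `w` are not joined by a bidirected
edge, the errors `ε v` and `ε w` are uncorrelated. If moreover `v` is the only parent of `w`, this
reads `Cov(ε v, X w) = Cov(ε v, X v) * Λ v w`, a linear equation for the coefficient `Λ v w`.

Along the chain `a → b → c → d` of the example these equations determine the coefficients one after
the other. They give `Λ a b = 3/4` and `Λ b c = 4/3`; but then `Cov(ε c, X c) = 1 - 4/3 * 3/4 = 0`
while `Cov(ε c, X d) = 1/2 - 4/3 * 1/2 ≠ 0`, so the equation for `Λ c d` has no solution.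
-/

open Matrix

/-- The graph `G'` of Example 3: vertices `a = 0, b = 1, c = 2, d = 3`,
directed edges `a→b, b→c, c→d`, bidirected edges `a↔c, b↔d, a↔d`. -/
def exampleGraph3 : MixedGraph (Fin 4) where
  D v w := (v = 0 ∧ w = 1) ∨ (v = 1 ∧ w = 2) ∨ (v = 2 ∧ w = 3)
  B v w := (v = 0 ∧ w = 2) ∨ (v = 2 ∧ w = 0) ∨ (v = 1 ∧ w = 3) ∨ (v = 3 ∧ w = 1) ∨
           (v = 0 ∧ w = 3) ∨ (v = 3 ∧ w = 0)
  symm := by decide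
  irrefl := by decide

lemma eq_transpose_inv_mul_mul_inv_iff {n R : Type*} [Fintype n] [DecidableEq n] [CommRing R]
    {A S Ω : Matrix n n R} (hA : IsUnit A) : S = (A⁻¹)ᵀ * Ω * A⁻¹ ↔ Aᵀ * S * A = Ω := by
  have hdet : IsUnit A.det := (isUnit_iff_isUnit_det A).mp hA
  constructor
  · rintro rfl
    calc Aᵀ * ((A⁻¹)ᵀ * Ω * A⁻¹) * A = (A⁻¹ * A)ᵀ * Ω * (A⁻¹ * A) := by
          simp only [transpose_mul, Matrix.mul_assoc]
      _ = Ω := by simp [nonsing_inv_mul A hdet]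
  · rintro rfl
    calc S = (A * A⁻¹)ᵀ * S * (A * A⁻¹) := by simp [mul_nonsing_inv A hdet]
      _ = (A⁻¹)ᵀ * (Aᵀ * S * A) * A⁻¹ := by simp only [transpose_mul, Matrix.mul_assoc]

namespace MixedGraph

variable {V : Type*} {G : MixedGraph V} {Λ S : Matrix V V ℝ}

lemma acyclic_of_forall_lt {α : Type*} [Preorder α] (f : V → α)
    (hf : ∀ v w, G.D v w → f v < f w) : G.Acyclic := fun v hv =>
  lt_irrefl (f v) <| by
    simpa [Function.onFun, Relation.transGen_eq_self] using
      Relation.TransGen.lift (p := (· < ·)) f hf v v hv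

lemma Acyclic.wellFounded_swap [Finite V] (hG : G.Acyclic) :
    WellFounded (Function.swap G.D) := by
  have : Std.Irrefl (Relation.TransGen (Function.swap G.D)) :=
    ⟨fun v hv => hG v (Relation.transGen_swap.mp hv)⟩
  exact Subrelation.wf Relation.TransGen.single
    (Finite.wellFounded_of_trans_of_irrefl (Relation.TransGen (Function.swap G.D)))

lemma LamCompat.isUnit_one_sub [Fintype V] [DecidableEq V] (hΛ : G.LamCompat Λ)
    (hG : G.Acyclic) : IsUnit (1 - Λ) := by
  refine mulVec_injective_iff_isUnit.mp
    ((injective_iff_map_eq_zero (1 - Λ).mulVecLin).mpr fun x hx => funext fun v => ?_)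
  have hfix : Λ *ᵥ x = x := by
    simpa [sub_mulVec, sub_eq_zero, eq_comm] using hx
  -- `x v` is a combination of the `x w` with `v → w`, so `x` vanishes inductively from the sinks.
  induction v using hG.wellFounded_swap.induction with
  | _ v ih =>
    rw [← hfix]
    refine Finset.sum_eq_zero fun w _ => ?_
    by_cases hvw : G.D v w
    · simp [ih w hvw]
    · simp [hΛ v w hvw]

lemma mem_model_iff_s13 [Fintype V] [DecidableEq V] (hG : G.Acyclic) :
    S ∈ G.model ↔ ∃ Λ, G.LamCompat Λ ∧ G.OmCompat ((1 - Λ)ᵀ * S * (1 - Λ)) := by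
  refine ⟨fun ⟨Λ, Ω, hΛ, hΩ, hS⟩ => ⟨Λ, hΛ, ?_⟩, fun ⟨Λ, hΛ, hΩ⟩ => ⟨Λ, _, hΛ, hΩ, ?_⟩⟩
  · rwa [(eq_transpose_inv_mul_mul_inv_iff (hΛ.isUnit_one_sub hG)).mp hS]
  · exact (eq_transpose_inv_mul_mul_inv_iff (hΛ.isUnit_one_sub hG)).mpr rfl

lemma OmCompat.apply_eq_zero [Fintype V] {Ω : Matrix V V ℝ} (hΩ : G.OmCompat Ω) {v w : V}
    (hne : v ≠ w) (hB : ¬ G.B v w) : Ω v w = 0 :=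
  hΩ.2 v w hne hB fun h => hB (G.symm w v h)

lemma LamCompat.mul_one_sub_apply [Fintype V] [DecidableEq V] {n : Type*} (hΛ : G.LamCompat Λ)
    {p w : V} (hw : ∀ u, G.D u w → u = p) (M : Matrix n V ℝ) (i : n) :
    (M * (1 - Λ) : Matrix n V ℝ) i w = M i w - M i p * Λ p w := by
  have hsum : (M * Λ) i w = M i p * Λ p w :=
    Fintype.sum_eq_single p fun u hu => by simp [hΛ u w fun h => hu (hw u h)]
  rw [Matrix.mul_sub, Matrix.mul_one, Matrix.sub_apply, hsum]

lemma LamCompat.transpose_one_sub_mul_apply [Fintype V] [DecidableEq V] {n : Type*}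
    (hΛ : G.LamCompat Λ) {p v : V} (hv : ∀ u, G.D u v → u = p) (M : Matrix V n ℝ) (j : n) :
    ((1 - Λ)ᵀ * M : Matrix V n ℝ) v j = M v j - Λ p v * M p j := by
  rw [← transpose_apply ((1 - Λ)ᵀ * M), transpose_mul, transpose_transpose,
    hΛ.mul_one_sub_apply hv, transpose_apply, transpose_apply, mul_comm]

lemma LamCompat.regression_eq_of_unique_parent [Fintype V] [DecidableEq V] (hΛ : G.LamCompat Λ)
    (hΩ : G.OmCompat ((1 - Λ)ᵀ * S * (1 - Λ))) {p v w : V} (hne : v ≠ w) (hB : ¬ G.B v w)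
    (hv : ∀ u, G.D u v → u = p) (hw : ∀ u, G.D u w → u = v) :
    S v w - Λ p v * S p w = (S v v - Λ p v * S p v) * Λ v w := by
  have h := hΩ.apply_eq_zero hne hB
  rwa [hΛ.mul_one_sub_apply hw, hΛ.transpose_one_sub_mul_apply hv,
    hΛ.transpose_one_sub_mul_apply hv, sub_eq_zero] at h

end MixedGraph

lemma isBAP_exampleGraph3 : exampleGraph3.IsBAP := by
  refine ⟨MixedGraph.acyclic_of_forall_lt id ?_, ?_⟩
  · unfold exampleGraph3
    decide
  · unfold MixedGraph.Simple exampleGraph3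
    decide

lemma exists_chain_coeffs_of_mem_model_exampleGraph3 {S : Matrix (Fin 4) (Fin 4) ℝ}
    (hS : S ∈ exampleGraph3.model) :
    ∃ l m k : ℝ, S 0 1 = S 0 0 * l ∧
      S 1 2 - l * S 0 2 = (S 1 1 - l * S 0 1) * m ∧
      S 2 3 - m * S 1 3 = (S 2 2 - m * S 1 2) * k := by
  obtain ⟨Λ, hΛ, hΩ⟩ := (MixedGraph.mem_model_iff_s13 isBAP_exampleGraph3.1).mp hS
  have parent_a : ∀ u, exampleGraph3.D u 0 → u = 0 := by simp [exampleGraph3]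
  have parent_b : ∀ u, exampleGraph3.D u 1 → u = 0 := by simp [exampleGraph3]
  have parent_c : ∀ u, exampleGraph3.D u 2 → u = 1 := by simp [exampleGraph3]
  have parent_d : ∀ u, exampleGraph3.D u 3 → u = 2 := by simp [exampleGraph3]
  -- The source `0` has no parents: its own loop, with coefficient zero, serves as its parent edge.
  have loop_a : Λ 0 0 = 0 := hΛ 0 0 (by simp [exampleGraph3])
  refine ⟨Λ 0 1, Λ 1 2, Λ 2 3, ?_, ?_, ?_⟩
  · simpa [loop_a] using
      hΛ.regression_eq_of_unique_parent hΩ (by decide) (by simp [exampleGraph3]) parent_a parent_b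
  · exact hΛ.regression_eq_of_unique_parent hΩ (by decide) (by simp [exampleGraph3])
      parent_b parent_c
  · exact hΛ.regression_eq_of_unique_parent hΩ (by decide) (by simp [exampleGraph3])
      parent_c parent_d

/-- The covariance matrix `Σ` of Example 3. -/
noncomputable def exampleCov3 : Matrix (Fin 4) (Fin 4) ℝ :=
  !![1, 3/4, 2/9, 1/2;
     3/4, 1, 3/4, 1/2;
     2/9, 3/4, 1, 1/2;
     1/2, 1/2, 1/2, 1]

/-- The unit upper triangular factor `U` of the decomposition `Uᵀ * diagonal d * U` of
`exampleCov3`. -/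
noncomputable def exampleCov3Factor : Matrix (Fin 4) (Fin 4) ℝ :=
  !![1, 3/4, 2/9, 1/2;
     0, 1, 4/3, 2/7;
     0, 0, 1, 9/7;
     0, 0, 0, 1]

lemma det_exampleCov3Factor : exampleCov3Factor.det = 1 := by
  have hU : exampleCov3Factor.IsUpperTriangular := fun i j hij => by
    fin_cases i <;> fin_cases j <;> first | rfl | exact absurd hij (by decide)
  rw [det_of_isUpperTriangular hU]
  simp [Fin.prod_univ_four, exampleCov3Factor]

lemma exampleCov3_eq_conjTranspose_mul_diagonal_mul :
    exampleCov3 =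
      exampleCov3Factorᴴ * diagonal ![1, 7/16, 14/81, 3/7] * exampleCov3Factor := by
  ext i j
  rw [Matrix.mul_apply]
  simp only [mul_diagonal, conjTranspose_apply, Fin.sum_univ_four]
  fin_cases i <;> fin_cases j <;> simp [exampleCov3, exampleCov3Factor] <;> norm_num

lemma posDef_exampleCov3 : exampleCov3.PosDef := by
  have hd : (diagonal ![1, 7/16, 14/81, 3/7] : Matrix (Fin 4) (Fin 4) ℝ).PosDef :=
    .diagonal fun i => by fin_cases i <;> norm_num
  rw [exampleCov3_eq_conjTranspose_mul_diagonal_mul]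
  exact hd.conjTranspose_mul_mul_same
    (mulVec_injective_of_det_ne_zero (by simp [det_exampleCov3Factor]))

lemma exampleCov3_notMem_model_exampleGraph3 : exampleCov3 ∉ exampleGraph3.model := by
  intro hmem
  obtain ⟨l, m, k, hl, hm, hk⟩ := exists_chain_coeffs_of_mem_model_exampleGraph3 hmem
  have hl : 3/4 = 1 * l := hl
  have hm : 3/4 - l * (2/9) = (1 - l * (3/4)) * m := hm
  have hk : 1/2 - m * (1/2) = (1 - m * (3/4)) * k := hk
  obtain rfl : l = 3/4 := by linarith
  obtain rfl : m = 4/3 := by linarith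
  linarith

/-- Example 3: `exampleGraph3` is a BAP, and the given positive
definite matrix `Σ` is not in its model. -/
theorem example3_posDef_not_mem_model :
    exampleGraph3.IsBAP ∧
    (!![1, 3/4, 2/9, 1/2;
        3/4, 1, 3/4, 1/2;
        2/9, 3/4, 1, 1/2;
        1/2, 1/2, 1/2, 1] : Matrix (Fin 4) (Fin 4) ℝ).PosDef ∧
    (!![1, 3/4, 2/9, 1/2;
        3/4, 1, 3/4, 1/2;
        2/9, 3/4, 1, 1/2;
        1/2, 1/2, 1/2, 1] : Matrix (Fin 4) (Fin 4) ℝ) ∉ exampleGraph3.model :=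
  ⟨isBAP_exampleGraph3, posDef_exampleCov3, exampleCov3_notMem_model_exampleGraph3⟩
end
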